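/- arXiv:2103.11917 — 2 statements merged into one kernel-verified Lean document; each statement's English description precedes it below -/
import Mathlib

section
/- A coloring c of a digraph D is the greedy coloring with respect to some ordering of the vertices of D if and only if c is an acyclic coloring and for every vertex v colored j and every color i < j used by c, the set V_i ∪ {v} contains a directed cycle, where V_i is the class of vertices colored i. -/
/-!
A greedy coloring is acyclic because each class is, at the moment its last vertex is placed,
a set the algorithm has just certified to be acyclic (`acyclicSet_greedy_class`). A vertex `v`
does not get a smaller color `i` only because the part of the class `V_i` placed before `v` already
closes a cycle with `v`, hence so does all of `V_i` (`AcyclicSet.mono`).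

Conversely, order the vertices by nondecreasing color. When the vertex `v` is reached, every class
of color `i < c v` is complete, so the hypothesis says that `v` closes a cycle with it, whereas the
part of the class of `v` placed so far is acyclic together with `v`. By strong induction on the
position, the algorithm therefore picks exactly `c v` (`greedyColorAt_eq_of_monotone`).
-/

/-
Common definitions.

A digraph `D : Digraph V` on a finite vertex type `V` is loopless when
`∀ v, ¬ D.Adj v v` (this appears as a hypothesis in the theorems below).
-/

namespace Paper

open Function

variable {V : Type*}

/-- A set `S` of vertices of `D` is acyclic if the arc relation restricted to `S`
admits no vertex with a nonempty directed walk from itself back to itself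
(i.e. the subdigraph induced on `S` has no directed cycle). -/
def AcyclicSet (D : Digraph V) (S : Set V) : Prop :=
  ∀ v : V, ¬ Relation.TransGen (fun a b => a ∈ S ∧ b ∈ S ∧ D.Adj a b) v v

/-- An acyclic coloring: every color class is acyclic. -/
def IsAcyclicColoring (D : Digraph V) {k : ℕ} (c : V → Fin k) : Prop :=
  ∀ i : Fin k, AcyclicSet D {v | c v = i}

/-- A complete coloring: for every ordered pair of distinct colors there is an arc
from a vertex of the first color to a vertex of the second color. -/
def IsCompleteColoring (D : Digraph V) {k : ℕ} (c : V → Fin k) : Prop :=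
  ∀ i j : Fin k, i ≠ j → ∃ u v : V, D.Adj u v ∧ c u = i ∧ c v = j

/-- The dichromatic number `dc(D)`: the least number of colors in an acyclic coloring. -/
noncomputable def dichromatic (D : Digraph V) [Fintype V] : ℕ :=
  sInf {k : ℕ | ∃ c : V → Fin k, IsAcyclicColoring D c}

/-- The diachromatic number `dac(D)`: the largest number of colors in an acyclic
complete coloring (a coloring "with `k` colors" uses all `k` colors, i.e. is surjective). -/
noncomputable def diachromatic (D : Digraph V) [Fintype V] : ℕ :=
  sSup {k : ℕ | ∃ c : V → Fin k,
    Surjective c ∧ IsAcyclicColoring D c ∧ IsCompleteColoring D c}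

/-- The color (a positive integer; `1` is the first color) that the greedy algorithm,
run along the vertex ordering `e` (position `0` first), assigns to the vertex in
position `i`: namely the smallest positive color whose current class stays acyclic
after adding this vertex (a fresh color has an empty class, so for a loopless digraph
this in particular uses a new color exactly when the vertex forms a directed cycle
with every currently used class). -/
noncomputable def greedyColorAt (D : Digraph V) [Fintype V]
    (e : Fin (Fintype.card V) ≃ V) (i : Fin (Fintype.card V)) : ℕ :=
  sInf {c : ℕ | 1 ≤ c ∧
    AcyclicSet D (insert (e i)
      {v : V | ∃ j : Fin (Fintype.card V), ∃ _ : j < i, e j = v ∧ greedyColorAt D e j = c})}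
termination_by i.val
decreasing_by exact ‹_›

/-- The greedy coloring of `D` with respect to the vertex ordering `e`. -/
noncomputable def greedyColoring (D : Digraph V) [Fintype V]
    (e : Fin (Fintype.card V) ≃ V) : V → ℕ :=
  fun v => greedyColorAt D e (e.symm v)

/-- The number of colors used by the greedy coloring with respect to `e`. -/
noncomputable def greedyCount (D : Digraph V) [Fintype V]
    (e : Fin (Fintype.card V) ≃ V) : ℕ :=
  (Finset.univ.image (greedyColoring D e)).card

/-- The digrundy number `dG(D)`: the largest number of colors used by a greedy
coloring, over all orderings of the vertices. -/
noncomputable def digrundy (D : Digraph V) [Fintype V] : ℕ :=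
  sSup {k : ℕ | ∃ e : Fin (Fintype.card V) ≃ V, greedyCount D e = k}

/-- The complement of a digraph: arcs are exactly the ordered pairs of distinct
vertices that are not arcs of `D`. -/
def digraphCompl (D : Digraph V) : Digraph V :=
  ⟨fun u v => u ≠ v ∧ ¬ D.Adj u v⟩

/-- The maximum out-degree `Δ⁺(D)`. -/
noncomputable def maxOutDegree (D : Digraph V) [Fintype V] : ℕ :=
  ⨆ v : V, {u : V | D.Adj v u}.ncard

/-- The maximum in-degree `Δ⁻(D)`. -/
noncomputable def maxInDegree (D : Digraph V) [Fintype V] : ℕ :=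
  ⨆ v : V, {u : V | D.Adj u v}.ncard

/-- The clique number `ω(D)`: the maximum size of a set of vertices every two of
which are joined by arcs in both directions. -/
noncomputable def cliqueNumber (D : Digraph V) [Fintype V] : ℕ :=
  sSup {k : ℕ | ∃ S : Finset V, S.card = k ∧ ∀ u ∈ S, ∀ v ∈ S, u ≠ v → D.Adj u v}

/-- The subdigraph of `D` induced on a set `S` of vertices. -/
def induceD (D : Digraph V) (S : Set V) : Digraph S :=
  ⟨fun u v => D.Adj u v⟩

/-- A parsimonious coloring along the vertex ordering `e`: an acyclic coloring, built
along `e`, in which each vertex must receive an already-used color whenever some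
existing color class remains acyclic upon adding the vertex, and receives the smallest
unused positive integer only if adding it to every existing class creates a directed
cycle. -/
def IsParsimonious (D : Digraph V) [Fintype V]
    (e : Fin (Fintype.card V) ≃ V) (c : V → ℕ) : Prop :=
  (∀ i : ℕ, AcyclicSet D {v | c v = i}) ∧
  ∀ i : Fin (Fintype.card V),
    ((∃ d : ℕ, (∃ j, j < i ∧ c (e j) = d) ∧
        AcyclicSet D (insert (e i) {v : V | ∃ j, j < i ∧ e j = v ∧ c v = d})) →
      ∃ j, j < i ∧ c (e j) = c (e i)) ∧
    ((¬ ∃ d : ℕ, (∃ j, j < i ∧ c (e j) = d) ∧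
        AcyclicSet D (insert (e i) {v : V | ∃ j, j < i ∧ e j = v ∧ c v = d})) →
      c (e i) = sInf {m : ℕ | 1 ≤ m ∧ ∀ j, j < i → c (e j) ≠ m})

/-- The parsimonious `e`-coloring number `dc_e(D)`: the minimum number of colors in a
parsimonious coloring along `e`. -/
noncomputable def parsimoniousNumber (D : Digraph V) [Fintype V]
    (e : Fin (Fintype.card V) ≃ V) : ℕ :=
  sInf {k : ℕ | ∃ c : V → ℕ, IsParsimonious D e c ∧ (Finset.univ.image c).card = k}

/-- The diochromatic number `dc^o(D)`: the maximum of the parsimonious coloring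
numbers over all orderings of the vertices. -/
noncomputable def diochromatic (D : Digraph V) [Fintype V] : ℕ :=
  sSup {k : ℕ | ∃ e : Fin (Fintype.card V) ≃ V, parsimoniousNumber D e = k}

end Paper

namespace Paper

theorem AcyclicSet.mono {V : Type*} {D : Digraph V} {S T : Set V} (hT : AcyclicSet D T)
    (h : S ⊆ T) : AcyclicSet D S :=
  fun v hv => hT v (Relation.TransGen.mono (fun _ _ hab => ⟨h hab.1, h hab.2.1, hab.2.2⟩) _ _ hv)

theorem acyclicSet_singleton {V : Type*} {D : Digraph V} (hD : ∀ v : V, ¬ D.Adj v v) (x : V) :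
    AcyclicSet D {x} := by
  intro v hv
  obtain ⟨b, ⟨ha, hb, hab⟩, -⟩ := Relation.TransGen.head'_iff.1 hv
  rw [Set.mem_singleton_iff] at ha hb
  subst ha hb
  exact hD _ hab

/-- The greedy color is admissible: the infimum defining it is over a nonempty set, since any
color exceeding all those given so far has an empty class. -/
theorem greedyColorAt_spec {V : Type*} [Fintype V] {D : Digraph V} (hD : ∀ v : V, ¬ D.Adj v v)
    (e : Fin (Fintype.card V) ≃ V) (i : Fin (Fintype.card V)) :
    1 ≤ greedyColorAt D e i ∧ AcyclicSet D (insert (e i)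
      {v : V | ∃ j : Fin (Fintype.card V), ∃ _ : j < i,
        e j = v ∧ greedyColorAt D e j = greedyColorAt D e i}) := by
  have hne : {c : ℕ | 1 ≤ c ∧ AcyclicSet D (insert (e i)
      {v : V | ∃ j : Fin (Fintype.card V), ∃ _ : j < i,
        e j = v ∧ greedyColorAt D e j = c})}.Nonempty := by
    refine ⟨(∑ j, greedyColorAt D e j) + 1, by omega, (acyclicSet_singleton hD (e i)).mono ?_⟩
    rintro v (rfl | ⟨j, -, -, hj⟩)
    · rfl
    · have := Finset.single_le_sum (f := greedyColorAt D e) (fun _ _ => Nat.zero_le _)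
        (Finset.mem_univ j)
      omega
  have := Nat.sInf_mem hne
  rw [← greedyColorAt] at this
  exact this

theorem not_acyclicSet_of_lt_greedyColorAt {V : Type*} [Fintype V] {D : Digraph V}
    {e : Fin (Fintype.card V) ≃ V} {i : Fin (Fintype.card V)} {k : ℕ} (hk : 1 ≤ k)
    (hlt : k < greedyColorAt D e i) :
    ¬ AcyclicSet D (insert (e i)
      {v : V | ∃ j : Fin (Fintype.card V), ∃ _ : j < i, e j = v ∧ greedyColorAt D e j = k}) := by
  rw [greedyColorAt] at hlt
  exact fun h => Nat.notMem_of_lt_sInf hlt ⟨hk, h⟩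

theorem acyclicSet_greedy_class {V : Type*} [Fintype V] {D : Digraph V}
    (hD : ∀ v : V, ¬ D.Adj v v) (e : Fin (Fintype.card V) ≃ V) (k : ℕ) :
    AcyclicSet D {v | greedyColoring D e v = k} := by
  intro v hv
  obtain ⟨b, ⟨ha, -⟩, -⟩ := Relation.TransGen.head'_iff.1 hv
  -- The last vertex of the class in the ordering: its admissibility covers the whole class.
  obtain ⟨i, hi, hmax⟩ := (Set.toFinite {i | greedyColorAt D e i = k}).exists_maximal
    ⟨e.symm v, ha⟩
  refine ((greedyColorAt_spec hD e i).2.mono ?_) v hv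
  intro u (hu : greedyColorAt D e (e.symm u) = k)
  rcases eq_or_ne (e.symm u) i with h | h
  · exact Or.inl (by simp [← h])
  · have hle : e.symm u ≤ i := (le_total (e.symm u) i).elim id fun hiu => hmax hu hiu
    exact Or.inr ⟨e.symm u, lt_of_le_of_ne hle h, by simp, hu.trans hi.symm⟩

theorem greedyColorAt_eq_of_monotone {V : Type*} [Fintype V] {D : Digraph V} {c : V → ℕ}
    {e : Fin (Fintype.card V) ≃ V} (hmono : Monotone (c ∘ e)) (hpos : ∀ v, 1 ≤ c v)
    (hacyc : ∀ i : ℕ, AcyclicSet D {v | c v = i})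
    (hcyc : ∀ v : V, ∀ i : ℕ, 1 ≤ i → i < c v → ¬ AcyclicSet D (insert v {u : V | c u = i}))
    (i : Fin (Fintype.card V)) : greedyColorAt D e i = c (e i) := by
  induction i using WellFoundedLT.induction with
  | ind i ih =>
    rw [greedyColorAt]
    refine IsLeast.csInf_eq ⟨⟨hpos _, (hacyc (c (e i))).mono ?_⟩, ?_⟩
    · rintro v (rfl | ⟨j, hj, rfl, h⟩)
      · rfl
      · exact (ih j hj).symm.trans h
    · rintro k ⟨hk, hak⟩
      by_contra! hlt
      refine hcyc (e i) k hk hlt (hak.mono (Set.insert_subset_insert ?_))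
      intro u (hu : c u = k)
      -- By monotonicity, every vertex of color `k < c (e i)` precedes `e i`.
      have hj : e.symm u < i := by
        by_contra! hle
        have := hmono hle
        simp only [Function.comp_apply, Equiv.apply_symm_apply] at this
        omega
      exact ⟨e.symm u, hj, by simp, by rw [ih _ hj]; simpa using hu⟩

/-- A coloring `c` of a digraph `D` (with positive-integer colors, using
an initial segment `1,…,k` of the colors) is the greedy coloring with respect to some
ordering of the vertices if and only if `c` is an acyclic coloring and for every
vertex `v` colored `j` and every color `i < j` used by `c`, the set `V_i ∪ {v}`
contains a directed cycle, where `V_i` is the class of vertices colored `i`. -/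
theorem greedy_iff_digrundy_coloring {V : Type*} [Fintype V]
    (D : Digraph V) (hD : ∀ v : V, ¬ D.Adj v v)
    (c : V → ℕ) (hc : ∃ k : ℕ, ∀ i : ℕ, (∃ v : V, c v = i) ↔ 1 ≤ i ∧ i ≤ k) :
    (∃ e : Fin (Fintype.card V) ≃ V, c = greedyColoring D e) ↔
      ((∀ i : ℕ, AcyclicSet D {v | c v = i}) ∧
        ∀ v : V, ∀ i : ℕ, 1 ≤ i → i < c v → (∃ u : V, c u = i) →
          ¬ AcyclicSet D (insert v {u : V | c u = i})) := by
  constructor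
  · rintro ⟨e, rfl⟩
    refine ⟨acyclicSet_greedy_class hD e, fun v i hi hlt _ h => ?_⟩
    refine not_acyclicSet_of_lt_greedyColorAt hi hlt (h.mono ?_)
    rw [Equiv.apply_symm_apply]
    refine Set.insert_subset_insert ?_
    rintro _ ⟨j, -, rfl, hj⟩
    simpa [greedyColoring] using hj
  · rintro ⟨hacyc, hcyc⟩
    obtain ⟨k, hk⟩ := hc
    let e₀ := (Fintype.equivFin V).symm
    let e : Fin (Fintype.card V) ≃ V := (Tuple.sort (c ∘ e₀)).trans e₀
    have hmono : Monotone (c ∘ e) := Tuple.monotone_sort (c ∘ e₀)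
    refine ⟨e, funext fun v => ?_⟩
    have := greedyColorAt_eq_of_monotone hmono (fun v => ((hk _).1 ⟨v, rfl⟩).1) hacyc
      -- Colors form an initial segment, so each `i` with `1 ≤ i < c v` is used.
      (fun v i hi hlt => hcyc v i hi hlt
        ((hk i).2 ⟨hi, hlt.le.trans ((hk _).1 ⟨v, rfl⟩).2⟩)) (e.symm v)
    rw [greedyColoring, this, Equiv.apply_symm_apply]

end Paper
end

section
/- If D is a digraph of order n, then dac(D) + dac(D^c) ≤ ⌊(4n+2)/3⌋, where D^c denotes the complement of D. -/
namespace Paper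

open Function

open Classical in
/-- The vertices which are alone in their color class. -/
noncomputable def lone {V : Type*} [Fintype V] {k : ℕ} (c : V → Fin k) : Finset V :=
  Finset.univ.filter fun v => ∀ w, c w = c v → w = v

theorem mem_lone {V : Type*} [Fintype V] {k : ℕ} {c : V → Fin k} {v : V} :
    v ∈ lone c ↔ ∀ w, c w = c v → w = v := by
  simp [lone]

/-- Non-singleton classes have at least two vertices, so `n ≥ a + 2 * (k - a)`, where `a` is the
number of singleton classes. -/
theorem two_mul_le_card_add_card_lone {V : Type*} [Fintype V] {k : ℕ} (c : V → Fin k)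
    (hc : Surjective c) : 2 * k ≤ Fintype.card V + (lone c).card := by
  classical
  have h1 := Finset.card_eq_sum_card_fiberwise (f := c) (s := Finset.univ)
    (t := Finset.univ) (fun _ _ => by simp)
  have h2 := Finset.card_eq_sum_card_fiberwise (f := c) (s := lone c)
    (t := Finset.univ) (fun _ _ => by simp)
  rw [← Finset.card_univ, h1, h2, ← Finset.sum_add_distrib]
  -- Each class contributes at least `2`: its size, plus one more if it is a singleton.
  have h3 : ∀ i ∈ (Finset.univ : Finset (Fin k)), 2 ≤
      (Finset.univ.filter fun v => c v = i).card + ((lone c).filter fun v => c v = i).card := by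
    intro i _
    obtain ⟨v, rfl⟩ := hc i
    have hv : 0 < (Finset.univ.filter fun w => c w = c v).card :=
      Finset.card_pos.2 ⟨v, by simp⟩
    by_cases h : v ∈ lone c
    · have : 0 < ((lone c).filter fun w => c w = c v).card :=
        Finset.card_pos.2 ⟨v, by simp [h]⟩
      omega
    · rw [mem_lone] at h
      push Not at h
      obtain ⟨w, hw, hne⟩ := h
      have : 1 < (Finset.univ.filter fun w => c w = c v).card :=
        Finset.one_lt_card.2 ⟨w, by simp [hw], v, by simp, hne⟩
      omega
  have h4 := Finset.sum_le_sum h3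
  simpa [mul_comm] using h4

/-- If `D` and `D'` share no arc, then `D` has every arc between singleton classes of `c`, so at
most one of the `l` classes of `c'` avoids the complement of `lone c`. -/
theorem add_card_lone_le {V : Type*} [Fintype V] {D D' : Digraph V}
    (hDD : ∀ u v, D.Adj u v → ¬ D'.Adj u v) {k l : ℕ} {c : V → Fin k} {c' : V → Fin l}
    (hc : IsCompleteColoring D c) (hc' : IsCompleteColoring D' c') :
    l + (lone c).card ≤ Fintype.card V + 1 := by
  classical
  -- `I` is the set of colors of `c'` that occur outside `lone c`.
  set I := (lone c)ᶜ.image c' with hI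
  have h1 : I.card ≤ (lone c)ᶜ.card := Finset.card_image_le
  have h2 := Finset.card_add_card_compl (lone c)
  have h3 := Finset.card_add_card_compl I
  rw [Fintype.card_fin] at h3
  have h4 : Iᶜ.card ≤ 1 := by
    rw [Finset.card_le_one]
    intro i hi j hj
    by_contra hij
    have key : ∀ v, c' v ∈ Iᶜ → v ∈ lone c := by
      intro v hv
      by_contra h
      exact Finset.mem_compl.1 hv (Finset.mem_image_of_mem _ (Finset.mem_compl.2 h))
    obtain ⟨u, v, huv, rfl, rfl⟩ := hc' i j hij
    have hu := mem_lone.1 (key u hi)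
    have hv := mem_lone.1 (key v hj)
    obtain ⟨x, y, hxy, hx, hy⟩ := hc (c u) (c v)
      (fun h => hij (congrArg c' (hv u h)))
    rw [hu x hx, hv y hy] at hxy
    exact hDD u v hxy huv
  omega

/-- The supremum defining `diachromatic` is attained, unless the set of color counts is empty:
then it takes the junk value `0`, which is harmless for an upper bound. -/
theorem diachromatic_spec {V : Type*} [Fintype V] (D : Digraph V) :
    diachromatic D = 0 ∨
      ∃ c : V → Fin (diachromatic D), Surjective c ∧ IsCompleteColoring D c := by
  rcases Set.eq_empty_or_nonempty {k : ℕ | ∃ c : V → Fin k,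
    Surjective c ∧ IsAcyclicColoring D c ∧ IsCompleteColoring D c} with h | h
  · left
    rw [diachromatic, h]
    exact csSup_empty
  · right
    obtain ⟨c, h1, -, h2⟩ := Nat.sSup_mem h ⟨Fintype.card V, by
      rintro k ⟨c, hc, -⟩
      simpa using Fintype.card_le_of_surjective c hc⟩
    exact ⟨c, h1, h2⟩

/-- If `D` is a digraph of order `n`, then
`dac(D) + dac(Dᶜ) ≤ ⌊(4n + 2)/3⌋`.  (Natural-number division is the floor.) -/
theorem diachromatic_nordhaus_gaddum_floor {V : Type*} [Fintype V]
    (D : Digraph V) (hD : ∀ v : V, ¬ D.Adj v v) :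
    diachromatic D + diachromatic (digraphCompl D) ≤ (4 * Fintype.card V + 2) / 3 := by
  have hle : ∀ {k : ℕ} (c : V → Fin k), Surjective c → k ≤ Fintype.card V := fun c hc => by
    simpa using Fintype.card_le_of_surjective c hc
  rcases diachromatic_spec D with h | ⟨c, hs, hc⟩ <;>
    rcases diachromatic_spec (digraphCompl D) with h' | ⟨c', hs', hc'⟩
  · omega
  · have := hle c' hs'
    omega
  · have := hle c hs
    omega
  · have h1 := two_mul_le_card_add_card_lone c hs
    have h2 := two_mul_le_card_add_card_lone c' hs'
    have h3 := add_card_lone_le (D := D) (D' := digraphCompl D) (fun _ _ h h' => h'.2 h) hc hc'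
    have h4 := add_card_lone_le (D := digraphCompl D) (D' := D) (fun _ _ h h' => h.2 h') hc' hc
    omega

end Paper
end
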